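/- arXiv:1008.4210 — 7 statements merged into one kernel-verified Lean document; each statement's English description precedes it below -/
import Mathlib

section
/- Let G be a connected interval graph with a fixed interval representation, and let V_1, …, V_l be the cliques determined by the points y_1, …, y_l. Then every minimal cut-set X of G is equal to V_i for some index i with 1 ≤ i ≤ l. -/
/-!
Suppose `p` and `q` lie in one component of `G` but in different components of `G - X`, with the
interval of `p` starting first. A connected family of intervals covers every point between two of
its members, so the component of `p` in `G - X` ends strictly before the interval of `q` begins, and
no interval of `G - X` crosses its right end. The sample point `y i` immediately after that end
therefore lies only in intervals of `X`, that is, `V_i ⊆ X`. By the covering property again, `V_i`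
still separates `p` from `q`, so minimality forces `X = V_i`.
-/

section CutSet

open SimpleGraph

variable {V : Type*} {G : SimpleGraph V} {A : Set V}

/-- `A` is a cut-set of `G`: deleting it increases the number of connected components. The count is
`Nat.card`, so infinitely many components count as `0`. -/
def IsCutSet (G : SimpleGraph V) (A : Set V) : Prop :=
  Nat.card G.ConnectedComponent < Nat.card (G.induce Aᶜ).ConnectedComponent

theorem IsCutSet.exists_reachable_not_reachable_induce [Finite G.ConnectedComponent]
    (hA : IsCutSet G A) :
    ∃ p q : (Aᶜ : Set V), G.Reachable p q ∧ ¬ (G.induce Aᶜ).Reachable p q := by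
  by_contra! h
  refine hA.not_ge (Nat.card_le_card_of_injective
    (ConnectedComponent.map (Embedding.induce Aᶜ).toHom) ?_)
  refine ConnectedComponent.ind₂ fun p q hpq => ?_
  exact ConnectedComponent.sound (h p q (ConnectedComponent.exact hpq))

theorem isCutSet_of_not_reachable_induce [Finite (G.induce Aᶜ).ConnectedComponent]
    (hA : ∀ v, ∃ w : (Aᶜ : Set V), G.Reachable w v) {p q : (Aᶜ : Set V)}
    (hpq : G.Reachable p q) (hpq' : ¬ (G.induce Aᶜ).Reachable p q) : IsCutSet G A := by
  let f : (G.induce Aᶜ).ConnectedComponent → G.ConnectedComponent :=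
    ConnectedComponent.map (Embedding.induce Aᶜ).toHom
  have hsurj : f.Surjective := ConnectedComponent.ind fun v =>
    let ⟨w, hw⟩ := hA v
    ⟨(G.induce Aᶜ).connectedComponentMk w, ConnectedComponent.sound hw⟩
  have hninj : ¬ f.Injective := fun hinj =>
    hpq' (ConnectedComponent.exact (hinj (ConnectedComponent.sound hpq)))
  refine (Nat.card_le_card_of_surjective f hsurj).lt_of_ne fun hcard => hninj ?_
  exact ((Nat.bijective_iff_surjective_and_card f).2 ⟨hsurj, hcard.symm⟩).injective

end CutSet

section Grid

variable {α : Type*} [Preorder α] {l : ℕ} {x : Fin (l + 1) → α}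

theorem le_iff_le_castSucc_of_mem_range (hx : Monotone x) {i : Fin l} {t : α}
    (ht : x i.castSucc < t ∧ t < x i.succ) {z : α} (hz : z ∈ Set.range x) :
    z ≤ t ↔ z ≤ x i.castSucc := by
  obtain ⟨j, rfl⟩ := hz
  refine ⟨fun hjt => hx ?_, fun hj => hj.trans ht.1.le⟩
  by_contra! hij
  exact (ht.2.trans_le (hx (Fin.castSucc_lt_iff_succ_le.1 hij))).not_ge hjt

theorem exists_castSucc_eq_of_lt_of_mem_range (hx : Monotone x) {r s : α}
    (hr : r ∈ Set.range x) (hs : s ∈ Set.range x) (hrs : r < s) :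
    ∃ i : Fin l, x i.castSucc = r := by
  obtain ⟨j, rfl⟩ := hr
  obtain ⟨k, rfl⟩ := hs
  obtain ⟨i, rfl⟩ := Fin.exists_castSucc_eq.2 (Fin.ne_last_of_lt (hx.reflect_lt hrs))
  exact ⟨i, rfl⟩

end Grid

/-- `v ↦ [a v, b v]` is an interval representation of `G`: distinct vertices are adjacent exactly
when their intervals meet. Intervals are nonempty, but may be single points. -/
structure IsIntervalRep {V α : Type*} [Preorder α] (G : SimpleGraph V) (a b : V → α) :
    Prop where
  left_le_right : ∀ v, a v ≤ b v
  adj_iff : ∀ u v, G.Adj u v ↔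
    u ≠ v ∧ (Set.Icc (a u) (b u) ∩ Set.Icc (a v) (b v)).Nonempty

/-- The clique of all vertices whose interval contains `t`; the paper's `V_i` is
`pointClique a b (y i)`. -/
def pointClique {V α : Type*} [Preorder α] (a b : V → α) (t : α) : Set V :=
  {v | t ∈ Set.Icc (a v) (b v)}

namespace IsIntervalRep

section Preorder

variable {V α : Type*} [Preorder α] {G : SimpleGraph V} {a b : V → α} {u v : V} {t : α}

theorem induce (rep : IsIntervalRep G a b) (s : Set V) :
    IsIntervalRep (G.induce s) (fun v => a v) (fun v => b v) where
  left_le_right v := rep.left_le_right v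
  adj_iff u v := by simp only [SimpleGraph.comap_adj, Function.Embedding.subtype_apply,
    rep.adj_iff, ne_eq, Subtype.ext_iff]

theorem left_le_right_of_adj (rep : IsIntervalRep G a b) (h : G.Adj u v) : a v ≤ b u :=
  let ⟨_, ht⟩ := ((rep.adj_iff u v).1 h).2
  ht.2.1.trans ht.1.2

theorem reachable_of_mem_pointClique (rep : IsIntervalRep G a b) (hu : u ∈ pointClique a b t)
    (hv : v ∈ pointClique a b t) : G.Reachable u v := by
  obtain rfl | huv := eq_or_ne u v
  · exact .refl u
  · exact ((rep.adj_iff u v).2 ⟨huv, t, hu, hv⟩).reachable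

theorem left_mem_pointClique (rep : IsIntervalRep G a b) (v : V) :
    v ∈ pointClique a b (a v) :=
  Set.left_mem_Icc.2 (rep.left_le_right v)

theorem right_mem_pointClique (rep : IsIntervalRep G a b) (v : V) :
    v ∈ pointClique a b (b v) :=
  Set.right_mem_Icc.2 (rep.left_le_right v)

theorem finite_connectedComponent (rep : IsIntervalRep G a b) (ha : (Set.range a).Finite) :
    Finite G.ConnectedComponent := by
  have := ha.to_subtype
  refine Finite.of_injective
    (fun c : G.ConnectedComponent => (⟨a c.out, c.out, rfl⟩ : Set.range a)) fun c d hcd => ?_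
  have heq : a c.out = a d.out := congrArg Subtype.val hcd
  have hreach : G.Reachable c.out d.out :=
    rep.reachable_of_mem_pointClique (heq ▸ rep.left_mem_pointClique _) (rep.left_mem_pointClique _)
  rw [← Quot.out_eq c, ← Quot.out_eq d]
  exact SimpleGraph.ConnectedComponent.sound hreach

end Preorder

section LinearOrder

variable {V α : Type*} [LinearOrder α] {G : SimpleGraph V} {a b : V → α} {p q u v : V} {t : α}

-- A discrete intermediate value theorem along a walk from `u` to `v`.
theorem exists_reachable_mem_pointClique (rep : IsIntervalRep G a b) (huv : G.Reachable u v)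
    (hu : a u ≤ t) (hv : t ≤ b v) : ∃ w ∈ pointClique a b t, G.Reachable u w := by
  obtain ⟨walk⟩ := huv
  induction walk with
  | @nil u => exact ⟨u, ⟨hu, hv⟩, .refl u⟩
  | @cons u u' v hadj _ ih =>
    obtain htu | hut := le_or_gt t (b u)
    · exact ⟨u, ⟨hu, htu⟩, .refl u⟩
    · obtain ⟨w, hw, hu'w⟩ := ih ((rep.left_le_right_of_adj hadj).trans hut.le) hv
      exact ⟨w, hw, hadj.reachable.trans hu'w⟩

theorem right_lt_left_of_not_reachable (rep : IsIntervalRep G a b) (hpq : ¬ G.Reachable p q)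
    (hle : a p ≤ a q) (hv : G.Reachable p v) : b v < a q := by
  by_contra! hqv
  obtain ⟨w, hw, hpw⟩ := rep.exists_reachable_mem_pointClique hv hle hqv
  exact hpq (hpw.trans (rep.reachable_of_mem_pointClique hw (rep.left_mem_pointClique q)))

-- The witness `c` reaches furthest to the right among the vertices in the component of `p`.
theorem exists_right_end_of_not_reachable (rep : IsIntervalRep G a b)
    (hb : (Set.range b).Finite) (hpq : ¬ G.Reachable p q) (hle : a p ≤ a q) :
    ∃ c, b p ≤ b c ∧ b c < a q ∧ ∀ v, a v ≤ b c → b v ≤ b c := by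
  obtain ⟨c, hpc, hmax⟩ := Set.Finite.exists_maximalFor' b {v | G.Reachable p v}
    (hb.subset (Set.image_subset_range _ _)) ⟨p, .refl p⟩
  have le_right {v : V} (hv : G.Reachable p v) : b v ≤ b c :=
    (le_total (b v) (b c)).elim id (hmax hv)
  refine ⟨c, le_right (.refl p), rep.right_lt_left_of_not_reachable hpq hle hpc, fun v hvc => ?_⟩
  by_contra! hcv
  have hcv' : G.Reachable c v :=
    rep.reachable_of_mem_pointClique (rep.right_mem_pointClique c) ⟨hvc, hcv.le⟩
  exact hcv.not_ge (le_right (hpc.trans hcv'))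

theorem exists_pointClique_subset_of_not_reachable (rep : IsIntervalRep G a b) {l : ℕ}
    {x : Fin (l + 1) → α} {y : Fin l → α} (ha : Set.range a ⊆ Set.range x)
    (hb : Set.range b ⊆ Set.range x) (hy : ∀ i, x i.castSucc < y i ∧ y i < x i.succ)
    {X : Set V} {p q : (Xᶜ : Set V)} (hpq : ¬ (G.induce Xᶜ).Reachable p q) (hle : a p ≤ a q) :
    ∃ i, pointClique a b (y i) ⊆ X ∧ b p < y i ∧ y i < a q := by
  have hx : Monotone x := Fin.monotone_iff_le_succ.2 fun i => ((hy i).1.trans (hy i).2).le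
  have hb' : (Set.range fun v : (Xᶜ : Set V) => b v).Finite :=
    ((Set.finite_range x).subset hb).subset (Set.range_comp_subset_range _ b)
  obtain ⟨c, hpc, hcq, hgap⟩ := (rep.induce Xᶜ).exists_right_end_of_not_reachable hb' hpq hle
  obtain ⟨i, hi⟩ : ∃ i : Fin l, x i.castSucc = b c :=
    exists_castSucc_eq_of_lt_of_mem_range hx (hb ⟨c, rfl⟩) (ha ⟨q, rfl⟩) hcq
  have hci : b c < y i := hi ▸ (hy i).1
  have left_le_iff (v : V) : a v ≤ y i ↔ a v ≤ b c :=
    hi ▸ le_iff_le_castSucc_of_mem_range hx (hy i) (ha ⟨v, rfl⟩)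
  refine ⟨i, fun v hv => ?_, hpc.trans_lt hci, ?_⟩
  · by_contra hvX
    exact (hv.2.trans (hgap ⟨v, hvX⟩ ((left_le_iff v).1 hv.1))).not_gt hci
  · exact not_le.1 fun hqi => hcq.not_ge ((left_le_iff q).1 hqi)

theorem isCutSet_pointClique (rep : IsIntervalRep G a b) (ha : (Set.range a).Finite)
    (hpq : G.Reachable p q) (hpt : b p < t) (htq : t < a q) :
    IsCutSet G (pointClique a b t) := by
  have hap : a p ≤ t := (rep.left_le_right p).trans hpt.le
  have hbq : t ≤ b q := htq.le.trans (rep.left_le_right q)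
  have hp : p ∉ pointClique a b t := fun h => hpt.not_ge h.2
  have hq : q ∉ pointClique a b t := fun h => htq.not_ge h.1
  have := (rep.induce (pointClique a b t)ᶜ).finite_connectedComponent
    (ha.subset (Set.range_comp_subset_range _ a))
  refine isCutSet_of_not_reachable_induce (p := ⟨p, hp⟩) (q := ⟨q, hq⟩) (fun v => ?_) hpq
    fun hpq' => ?_
  · by_cases hv : v ∈ pointClique a b t
    · obtain ⟨w, hw, hpw⟩ := rep.exists_reachable_mem_pointClique hpq hap hbq
      exact ⟨⟨p, hp⟩, hpw.trans (rep.reachable_of_mem_pointClique hw hv)⟩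
    · exact ⟨⟨v, hv⟩, .refl v⟩
  · obtain ⟨w, hw, -⟩ := (rep.induce _).exists_reachable_mem_pointClique hpq' hap hbq
    exact w.2 hw

end LinearOrder

end IsIntervalRep

theorem stmt_0_general {V α : Type*} [LinearOrder α] {G : SimpleGraph V} {a b : V → α}
    (rep : IsIntervalRep G a b) {l : ℕ} {x : Fin (l + 1) → α} {y : Fin l → α}
    (hxrange : Set.range a ∪ Set.range b ⊆ Set.range x)
    (hy : ∀ i, x i.castSucc < y i ∧ y i < x i.succ) {X : Set V}
    (hX : Minimal (IsCutSet G) X) : ∃ i, X = pointClique a b (y i) := by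
  obtain ⟨ha, hb⟩ := Set.union_subset_iff.1 hxrange
  have ha' : (Set.range a).Finite := (Set.finite_range x).subset ha
  have := rep.finite_connectedComponent ha'
  obtain ⟨p, q, hpq, hpq', hle⟩ : ∃ p q : (Xᶜ : Set V),
      G.Reachable p q ∧ ¬ (G.induce Xᶜ).Reachable p q ∧ a p ≤ a q := by
    obtain ⟨p, q, hpq, hpq'⟩ := hX.prop.exists_reachable_not_reachable_induce
    obtain hle | hle := le_total (a p) (a q)
    · exact ⟨p, q, hpq, hpq', hle⟩
    · exact ⟨q, p, hpq.symm, fun h => hpq' h.symm, hle⟩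
  obtain ⟨i, hiX, hpi, hiq⟩ := rep.exists_pointClique_subset_of_not_reachable ha hb hy hpq' hle
  exact ⟨i, hX.eq_of_superset (rep.isCutSet_pointClique ha' hpq hpi hiq) hiX⟩

/-- In a connected interval graph with a fixed interval representation,
every minimal cut-set equals one of the cliques `Vset i` determined by the points `y i`. -/
theorem stmt_0
    {V : Type*} [Fintype V] (G : SimpleGraph V)
    (a b : V → ℝ) (hab : ∀ v, a v < b v)
    (hadj : ∀ u v : V, G.Adj u v ↔
      u ≠ v ∧ (Set.Icc (a u) (b u) ∩ Set.Icc (a v) (b v)).Nonempty)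
    (hconn : G.Connected)
    (l : ℕ) (x : Fin (l + 1) → ℝ) (hx : StrictMono x)
    (hxrange : Set.range x = Set.range a ∪ Set.range b)
    (y : Fin l → ℝ)
    (hy : ∀ i : Fin l, x i.castSucc < y i ∧ y i < x i.succ)
    (Vset : Fin l → Set V)
    (hVset : ∀ i v, v ∈ Vset i ↔ y i ∈ Set.Icc (a v) (b v))
    (X : Set V)
    (hcut : Nat.card G.ConnectedComponent <
      Nat.card (G.induce Xᶜ).ConnectedComponent)
    (hmin : ∀ X' : Set V, X' ⊂ X →
      ¬ (Nat.card G.ConnectedComponent <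
        Nat.card (G.induce X'ᶜ).ConnectedComponent)) :
    ∃ i : Fin l, X = Vset i := by
  obtain ⟨i, hi⟩ := stmt_0_general ⟨fun v => (hab v).le, hadj⟩ hxrange.ge hy
    (Set.minimal_iff_forall_ssubset.2 ⟨hcut, fun X' => hmin X'⟩)
  exact ⟨i, hi.trans (Set.ext fun v => (hVset i v).symm)⟩
end

section
/- Let G be an interval graph with a fixed interval representation, and let V_1, …, V_l be the cliques determined by the points y_1, …, y_l. Suppose i_1 < i < i_2, u_1 ∈ V_{i_1} \ V_i and u_2 ∈ V_{i_2} \ V_i. Then every path in G from u_1 to u_2 passes through a vertex of V_i; in particular, u_1 and u_2 lie in different connected components of the subgraph of G induced on V(G) \ V_i. -/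
/-!
Consecutive vertices of a walk have intersecting intervals, so the intervals along the walk cover
everything between a point of the first and a point of the last. In particular they cover `y i`,
which lies between `y i₁` and `y i₂`.
-/

theorem strictMono_of_interlaced {α : Type*} [Preorder α] {l : ℕ} {x : Fin (l + 1) → α}
    (hx : Monotone x) {y : Fin l → α} (hy : ∀ i, x i.castSucc < y i ∧ y i < x i.succ) :
    StrictMono y := fun j k hjk =>
  calc
    y j < x j.succ := (hy j).2
    _ ≤ x k.castSucc := hx (Fin.succ_le_castSucc_iff.2 hjk)
    _ < y k := (hy k).1

section Walk

variable {V : Type*} {G : SimpleGraph V} {u v : V}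

theorem not_reachable_induce_compl {S : Set V} (hS : ∀ p : G.Walk u v, ∃ w ∈ p.support, w ∈ S)
    (hu : u ∉ S) (hv : v ∉ S) : ¬ (G.induce Sᶜ).Reachable ⟨u, hu⟩ ⟨v, hv⟩ := by
  rintro ⟨p⟩
  let incl := (SimpleGraph.Embedding.induce (G := G) Sᶜ).toHom
  obtain ⟨w, hw, hwS⟩ := hS (p.map incl)
  obtain ⟨z, -, rfl⟩ := List.mem_map.1 (p.support_map incl ▸ hw)
  exact z.2 hwS

theorem exists_mem_support_mem_of_mem_uIcc {α : Type*} [LinearOrder α] {I : V → Set α}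
    (hI : ∀ v, (I v).OrdConnected) (hadj : ∀ u v, G.Adj u v → (I u ∩ I v).Nonempty)
    (p : G.Walk u v) {r s t : α} (hr : r ∈ I u) (hs : s ∈ I v) (ht : t ∈ Set.uIcc r s) :
    ∃ w ∈ p.support, t ∈ I w := by
  induction p generalizing r with
  | @nil u => exact ⟨u, by simp, (hI u).uIcc_subset hr hs ht⟩
  | @cons u u' v huu' p ih =>
    obtain ⟨c, hcu, hcu'⟩ := hadj u u' huu'
    rcases Set.uIcc_subset_uIcc_union_uIcc (b := c) ht with hrc | hcs
    · exact ⟨u, by simp, (hI u).uIcc_subset hr hcu hrc⟩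
    · obtain ⟨w, hw, htw⟩ := ih hcu' hs hcs
      exact ⟨w, List.mem_cons_of_mem u hw, htw⟩

end Walk

theorem stmt_1_general {V α : Type*} [LinearOrder α] (G : SimpleGraph V) (I : V → Set α)
    (hI : ∀ v, (I v).OrdConnected) (hadj : ∀ u v, G.Adj u v → (I u ∩ I v).Nonempty)
    {r s t : α} (ht : t ∈ Set.uIcc r s) {u₁ u₂ : V} (hr : r ∈ I u₁) (hs : s ∈ I u₂)
    (hu₁ : t ∉ I u₁) (hu₂ : t ∉ I u₂) :
    (∀ p : G.Walk u₁ u₂, ∃ w ∈ p.support, t ∈ I w) ∧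
      ¬ (G.induce {v | t ∈ I v}ᶜ).Reachable ⟨u₁, hu₁⟩ ⟨u₂, hu₂⟩ := by
  have meets (p : G.Walk u₁ u₂) : ∃ w ∈ p.support, t ∈ I w :=
    exists_mem_support_mem_of_mem_uIcc hI hadj p hr hs ht
  exact ⟨meets, not_reachable_induce_compl meets hu₁ hu₂⟩

/-- In an interval graph with a fixed representation, if `i₁ < i < i₂`,
`u₁ ∈ Vset i₁ \ Vset i` and `u₂ ∈ Vset i₂ \ Vset i`, then every walk from `u₁` to `u₂`
meets `Vset i`; in particular `u₁` and `u₂` are in different components of the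
subgraph induced on the complement of `Vset i`. -/
theorem stmt_1
    {V : Type*} [Fintype V] (G : SimpleGraph V)
    (a b : V → ℝ) (hab : ∀ v, a v < b v)
    (hadj : ∀ u v : V, G.Adj u v ↔
      u ≠ v ∧ (Set.Icc (a u) (b u) ∩ Set.Icc (a v) (b v)).Nonempty)
    (l : ℕ) (x : Fin (l + 1) → ℝ) (hx : StrictMono x)
    (hxrange : Set.range x = Set.range a ∪ Set.range b)
    (y : Fin l → ℝ)
    (hy : ∀ i : Fin l, x i.castSucc < y i ∧ y i < x i.succ)
    (Vset : Fin l → Set V)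
    (hVset : ∀ i v, v ∈ Vset i ↔ y i ∈ Set.Icc (a v) (b v))
    (i₁ i i₂ : Fin l) (h₁ : i₁ < i) (h₂ : i < i₂)
    (u₁ u₂ : V)
    (hu₁ : u₁ ∈ Vset i₁ \ Vset i) (hu₂ : u₂ ∈ Vset i₂ \ Vset i) :
    (∀ p : G.Walk u₁ u₂, ∃ w ∈ p.support, w ∈ Vset i) ∧
      ¬ (G.induce (Vset i)ᶜ).Reachable ⟨u₁, hu₁.2⟩ ⟨u₂, hu₂.2⟩ := by
  obtain rfl : Vset = fun j => {v | y j ∈ Set.Icc (a v) (b v)} :=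
    funext fun j => Set.ext (hVset j)
  have y_strictMono : StrictMono y := strictMono_of_interlaced hx.monotone hy
  exact stmt_1_general G (fun v => Set.Icc (a v) (b v)) (fun _ => Set.ordConnected_Icc)
    (fun u v huv => ((hadj u v).1 huv).2)
    (Set.mem_uIcc_of_le (y_strictMono h₁).le (y_strictMono h₂).le) hu₁.1 hu₂.1 hu₁.2 hu₂.2
end

section
/- Let G be a connected interval graph with a fixed interval representation, let V_1, …, V_l be the cliques determined by the points y_1, …, y_l, and fix an index i with 1 ≤ i ≤ l. If there exist a vertex u whose interval lies entirely strictly to the left of y_i (i.e., b_u < y_i) and a vertex w whose interval lies entirely strictly to the right of y_i (i.e., a_w > y_i), then V_i is a cut-set of G: the subgraph of G induced on V(G) \ V_i is disconnected, with u and w lying in different connected components. -/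
/-!
Let `S` be the set of vertices whose interval contains `y`. Outside `S`, an interval that meets one
lying to the left of `y` also lies to the left of `y`. Hence no path avoiding `S` leads from the
left of `y` to its right, and `u`, `w` are separated. The inclusion of `G - S` into `G` induces a
map of connected components which identifies the components of `u` and `w`. It is surjective: a path
from `u` to `w` meets the clique `S`, so all of `S` lies in the component of `u`.
-/

open Set SimpleGraph

section

variable {V α : Type*} {G : SimpleGraph V}

theorem exists_notMem_reachable_of_not_reachable_induce {s : Set V} {u w : s}
    (huw : G.Reachable u w) (hsep : ¬ (G.induce s).Reachable u w) :
    ∃ v ∉ s, G.Reachable u v := by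
  classical
  obtain ⟨p⟩ := huw
  by_contra! h
  have support_subset : ∀ v ∈ p.support, v ∈ s := fun v hv ↦
    by_contra fun hvs ↦ h v hvs (p.takeUntil v hv).reachable
  exact hsep (p.induce s support_subset).reachable

theorem card_connectedComponent_lt_induce {s : Set V}
    [Finite (G.induce s).ConnectedComponent] (hs : ∀ v, ∃ t ∈ s, G.Reachable t v) {u w : s}
    (huw : G.Reachable u w) (hsep : ¬ (G.induce s).Reachable u w) :
    Nat.card G.ConnectedComponent < Nat.card (G.induce s).ConnectedComponent := by
  let inclusion : (G.induce s).ConnectedComponent → G.ConnectedComponent :=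
    ConnectedComponent.map (Embedding.induce s).toHom
  have inclusion_surjective : Function.Surjective inclusion := by
    refine ConnectedComponent.ind fun v ↦ ?_
    obtain ⟨t, ht, htv⟩ := hs v
    exact ⟨(G.induce s).connectedComponentMk ⟨t, ht⟩, ConnectedComponent.sound htv⟩
  have inclusion_not_injective : ¬ Function.Injective inclusion := fun hinj ↦
    hsep <| ConnectedComponent.exact <| hinj <| ConnectedComponent.sound huw
  exact lt_of_not_ge fun hle ↦
    inclusion_not_injective (inclusion_surjective.bijective_of_nat_card_le hle).injective

theorem card_connectedComponent_lt_induce_compl_of_isClique {K : Set V}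
    [Finite (G.induce Kᶜ).ConnectedComponent] (hK : G.IsClique K) {u w : ↥Kᶜ}
    (huw : G.Reachable u w) (hsep : ¬ (G.induce Kᶜ).Reachable u w) :
    Nat.card G.ConnectedComponent < Nat.card (G.induce Kᶜ).ConnectedComponent := by
  obtain ⟨k, hk, huk⟩ := exists_notMem_reachable_of_not_reachable_induce huw hsep
  refine card_connectedComponent_lt_induce (fun v ↦ ?_) huw hsep
  by_cases hv : v ∈ K
  · have hkv : G.Reachable k v := by
      rcases eq_or_ne k v with rfl | hne
      · exact .refl k
      · exact (hK (notMem_compl_iff.mp hk) hv hne).reachable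
    exact ⟨u, u.2, huk.trans hkv⟩
  · exact ⟨v, hv, .refl v⟩

variable [LinearOrder α] {y : α}

theorem subset_Iio_of_inter_nonempty {s t : Set α} (hs : s ⊆ Iio y) (ht : t.OrdConnected)
    (hyt : y ∉ t) (hst : (s ∩ t).Nonempty) : t ⊆ Iio y := by
  obtain ⟨z, hzs, hzt⟩ := hst
  exact fun z' hz't ↦ lt_of_not_ge fun hyz' ↦ hyt (ht.out hzt hz't ⟨(hs hzs).le, hyz'⟩)

/-- The sets `I v` represent `G` as an interval graph. Intervals are order-connected subsets of a
linear order: they may be open, unbounded or empty. -/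
structure IsIntervalRepresentation (G : SimpleGraph V) (I : V → Set α) : Prop where
  ordConnected : ∀ v, (I v).OrdConnected
  adj_iff : ∀ u v, G.Adj u v ↔ u ≠ v ∧ (I u ∩ I v).Nonempty

namespace IsIntervalRepresentation

variable {I : V → Set α}

theorem isClique_setOf_mem (hI : IsIntervalRepresentation G I) (y : α) :
    G.IsClique {v | y ∈ I v} :=
  fun u hu v hv huv ↦ (hI.adj_iff u v).mpr ⟨huv, y, hu, hv⟩

theorem subset_Iio_of_reachable (hI : IsIntervalRepresentation G I)
    {u v : ↥{v | y ∈ I v}ᶜ} (huv : (G.induce {v | y ∈ I v}ᶜ).Reachable u v)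
    (hu : I u ⊆ Iio y) : I v ⊆ Iio y := by
  rw [reachable_iff_reflTransGen] at huv
  induction huv with
  | refl => exact hu
  | @tail s t _ hst hs =>
    exact subset_Iio_of_inter_nonempty hs (hI.ordConnected t) t.2 ((hI.adj_iff s t).mp hst).2

theorem not_reachable_of_subset_Iio_of_subset_Ioi (hI : IsIntervalRepresentation G I)
    {u w : ↥{v | y ∈ I v}ᶜ} (hu : I u ⊆ Iio y) (hw : I w ⊆ Ioi y) (hne : (I w).Nonempty) :
    ¬ (G.induce {v | y ∈ I v}ᶜ).Reachable u w := by
  intro huw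
  obtain ⟨z, hz⟩ := hne
  exact lt_asymm (hI.subset_Iio_of_reachable huw hu hz) (hw hz)

end IsIntervalRepresentation

theorem stmt_2_general {I : V → Set α} (hI : IsIntervalRepresentation G I)
    [Finite (G.induce {v | y ∈ I v}ᶜ).ConnectedComponent] {u w : V} (huw : G.Reachable u w)
    (hu : I u ⊆ Iio y) (hw : I w ⊆ Ioi y) (hne : (I w).Nonempty) :
    ∃ (hu' : u ∈ {v | y ∈ I v}ᶜ) (hw' : w ∈ {v | y ∈ I v}ᶜ),
      ¬ (G.induce {v | y ∈ I v}ᶜ).Reachable ⟨u, hu'⟩ ⟨w, hw'⟩ ∧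
      Nat.card G.ConnectedComponent <
        Nat.card (G.induce {v | y ∈ I v}ᶜ).ConnectedComponent := by
  have hu' : u ∈ {v | y ∈ I v}ᶜ := fun hyu ↦ lt_irrefl y (hu hyu)
  have hw' : w ∈ {v | y ∈ I v}ᶜ := fun hyw ↦ lt_irrefl y (hw hyw)
  have hsep : ¬ (G.induce {v | y ∈ I v}ᶜ).Reachable ⟨u, hu'⟩ ⟨w, hw'⟩ :=
    hI.not_reachable_of_subset_Iio_of_subset_Ioi hu hw hne
  exact ⟨hu', hw', hsep,
    card_connectedComponent_lt_induce_compl_of_isClique (hI.isClique_setOf_mem y) huw hsep⟩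

end

/-- In a connected interval graph with a fixed representation, if some
vertex `u` has its interval entirely strictly left of `y i` and some vertex `w` has its
interval entirely strictly right of `y i`, then `Vset i` is a cut-set: the subgraph
induced on its complement has more connected components than `G`, with `u` and `w`
lying in different components. -/
theorem stmt_2
    {V : Type*} [Fintype V] (G : SimpleGraph V)
    (a b : V → ℝ) (hab : ∀ v, a v < b v)
    (hadj : ∀ u v : V, G.Adj u v ↔
      u ≠ v ∧ (Set.Icc (a u) (b u) ∩ Set.Icc (a v) (b v)).Nonempty)
    (hconn : G.Connected)
    (l : ℕ) (x : Fin (l + 1) → ℝ) (hx : StrictMono x)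
    (hxrange : Set.range x = Set.range a ∪ Set.range b)
    (y : Fin l → ℝ)
    (hy : ∀ i : Fin l, x i.castSucc < y i ∧ y i < x i.succ)
    (Vset : Fin l → Set V)
    (hVset : ∀ i v, v ∈ Vset i ↔ y i ∈ Set.Icc (a v) (b v))
    (i : Fin l) (u w : V)
    (hu : b u < y i) (hw : y i < a w) :
    ∃ (hu' : u ∈ (Vset i)ᶜ) (hw' : w ∈ (Vset i)ᶜ),
      ¬ (G.induce (Vset i)ᶜ).Reachable ⟨u, hu'⟩ ⟨w, hw'⟩ ∧
      Nat.card G.ConnectedComponent <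
        Nat.card (G.induce (Vset i)ᶜ).ConnectedComponent := by
  rw [show Vset i = {v | y i ∈ Icc (a v) (b v)} from Set.ext (hVset i)]
  exact stmt_2_general ⟨fun _ ↦ ordConnected_Icc, hadj⟩ (hconn.preconnected u w)
    (fun _ ht ↦ ht.2.trans_lt hu) (fun _ ht ↦ hw.trans_le ht.1) (nonempty_Icc.mpr (hab w).le)
end

section
/- Let G be an interval graph with a fixed interval representation, and let A be a dominating set of G of minimum cardinality. Then every vertex v ∈ A is adjacent to at most two vertices of A. -/
/-!
If `A` is a minimal dominating set, then each nonempty interval `I_u` with `u ∈ A` has a private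
point, one that lies in no other interval of `A`: otherwise `u` could be deleted from `A`. Fix a
point `t` of `I_v`. If the private points of two neighbours `x, y ∈ A` of `v` were on the same side
of `t`, one of them, say that of `y`, would lie between that of `x` and `t`, hence in the interval
`I_x ∪ I_v`, contradicting privacy. So each side of `t` accounts for at most one neighbour.
-/

section Order

variable {α : Type*} [LinearOrder α]

theorem ordConnected_union_of_inter_nonempty {s t : Set α} (hs : s.OrdConnected)
    (ht : t.OrdConnected) (hst : (s ∩ t).Nonempty) : (s ∪ t).OrdConnected := by
  obtain ⟨z, hzs, hzt⟩ := hst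
  rw [Set.ordConnected_iff_uIcc_subset_left (Set.mem_union_left t hzs)]
  rintro y (hys | hyt)
  · exact (hs.uIcc_subset hzs hys).trans Set.subset_union_left
  · exact (ht.uIcc_subset hzt hyt).trans Set.subset_union_right

theorem mem_uIcc_or_mem_uIcc_of_lt_iff_lt {x y t : α} (h : x < t ↔ y < t) :
    x ∈ Set.uIcc y t ∨ y ∈ Set.uIcc x t := by
  simp only [Set.mem_uIcc]
  grind

end Order

section IntersectionGraph

variable {V α : Type*} {G : SimpleGraph V} {s : V → Set α} {A : Set V} {u v x y : V}

/-- `A` is a dominating set of `G`: every vertex lies in `A` or has a neighbour in `A`. -/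
def IsDominating (G : SimpleGraph V) (A : Set V) : Prop :=
  ∀ v, v ∈ A ∨ ∃ u ∈ A, G.Adj v u

/-- `s` represents `G` as an intersection graph: distinct vertices are adjacent exactly when their
sets meet. Interval representations are those by order-connected sets in a linear order. -/
def IsIntersectionRepresentation (G : SimpleGraph V) (s : V → Set α) : Prop :=
  ∀ u v, G.Adj u v ↔ u ≠ v ∧ (s u ∩ s v).Nonempty

/-- `t` is a private point of `u` in the subfamily `A` of `s`: it lies in `s u`, but in no other
member of the subfamily. Private points are what prevents `u` from being deleted from a dominating
set. -/
def IsPrivatePoint (s : V → Set α) (A : Set V) (u : V) (t : α) : Prop :=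
  t ∈ s u ∧ ∀ w ∈ A, t ∈ s w → w = u

namespace IsIntersectionRepresentation

theorem mem_or_exists_adj (hG : IsIntersectionRepresentation G s) (hu : u ∈ A)
    (h : (s v ∩ s u).Nonempty) : v ∈ A ∨ ∃ w ∈ A, G.Adj v w := by
  by_cases hvu : v = u
  · exact .inl (hvu ▸ hu)
  · exact .inr ⟨u, hu, (hG v u).2 ⟨hvu, h⟩⟩

theorem isDominating_sdiff_singleton (hG : IsIntersectionRepresentation G s)
    (hA : IsDominating G A) (hu : (s u).Nonempty) (hcover : s u ⊆ ⋃ w ∈ A \ {u}, s w) :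
    IsDominating G (A \ {u}) := by
  have dominated_of_meets : ∀ v, (s v ∩ s u).Nonempty →
      v ∈ A \ {u} ∨ ∃ w ∈ A \ {u}, G.Adj v w := by
    rintro v ⟨t, htv, htu⟩
    obtain ⟨w, hw, htw⟩ := Set.mem_iUnion₂.1 (hcover htu)
    exact hG.mem_or_exists_adj hw ⟨t, htv, htw⟩
  intro v
  by_cases hvu : v = u
  · exact dominated_of_meets v (by rwa [hvu, Set.inter_self])
  obtain hvA | ⟨w, hwA, hvw⟩ := hA v
  · exact .inl ⟨hvA, hvu⟩
  by_cases hwu : w = u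
  · exact dominated_of_meets v (hwu ▸ ((hG v w).1 hvw).2)
  · exact .inr ⟨w, ⟨hwA, hwu⟩, hvw⟩

theorem exists_isPrivatePoint (hG : IsIntersectionRepresentation G s)
    (hA : Minimal (IsDominating G) A) (huA : u ∈ A) (hu : (s u).Nonempty) :
    ∃ t, IsPrivatePoint s A u t := by
  have not_cover : ¬ s u ⊆ ⋃ w ∈ A \ {u}, s w := fun hcover ↦
    (hA.le_of_le (hG.isDominating_sdiff_singleton hA.prop hu hcover) Set.sdiff_subset huA).2 rfl
  obtain ⟨t, htu, ht⟩ := Set.not_subset.1 not_cover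
  refine ⟨t, htu, fun w hwA htw ↦ ?_⟩
  by_contra hwu
  exact ht (Set.mem_biUnion ⟨hwA, hwu⟩ htw)

end IsIntersectionRepresentation

namespace IsPrivatePoint

variable [LinearOrder α] {p q t : α}

theorem eq_or_eq_of_mem_uIcc (hs : ∀ v, (s v).OrdConnected) (hxA : x ∈ A) (hvA : v ∈ A)
    (hxv : (s x ∩ s v).Nonempty) (hp : p ∈ s x) (ht : t ∈ s v) (hq : IsPrivatePoint s A y q)
    (hqpt : q ∈ Set.uIcc p t) : x = y ∨ v = y := by
  have hunion := ordConnected_union_of_inter_nonempty (hs x) (hs v) hxv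
  obtain hqx | hqv := hunion.uIcc_subset (.inl hp) (.inr ht) hqpt
  · exact .inl (hq.2 x hxA hqx)
  · exact .inr (hq.2 v hvA hqv)

theorem eq_of_lt_iff_lt (hG : IsIntersectionRepresentation G s) (hs : ∀ v, (s v).OrdConnected)
    (hxA : x ∈ A) (hyA : y ∈ A) (hvA : v ∈ A) (hvx : G.Adj v x) (hvy : G.Adj v y)
    (hp : IsPrivatePoint s A x p) (hq : IsPrivatePoint s A y q) (ht : t ∈ s v)
    (hside : p < t ↔ q < t) : x = y := by
  obtain hpqt | hqpt := mem_uIcc_or_mem_uIcc_of_lt_iff_lt hside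
  · exact ((hp.eq_or_eq_of_mem_uIcc hs hyA hvA ((hG y v).1 hvy.symm).2 hq.1 ht hpqt).resolve_right
      hvx.ne).symm
  · exact (hq.eq_or_eq_of_mem_uIcc hs hxA hvA ((hG x v).1 hvx.symm).2 hp.1 ht hqpt).resolve_right
      hvy.ne

end IsPrivatePoint

theorem stmt_3_general [LinearOrder α] (hG : IsIntersectionRepresentation G s)
    (hs : ∀ v, (s v).OrdConnected) (hA : Minimal (IsDominating G) A) (hvA : v ∈ A) :
    {u ∈ A | G.Adj v u}.encard ≤ 2 := by
  obtain hempty | ⟨w, -, hvw⟩ := {u ∈ A | G.Adj v u}.eq_empty_or_nonempty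
  · simp [hempty]
  obtain ⟨t, ht⟩ : (s v).Nonempty := ((hG v w).1 hvw).2.left
  have exists_private : ∀ u ∈ {u ∈ A | G.Adj v u}, ∃ p, IsPrivatePoint s A u p :=
    fun u ⟨huA, hvu⟩ ↦ hG.exists_isPrivatePoint hA huA ((hG v u).1 hvu).2.right
  have : Nonempty α := ⟨t⟩
  choose! p hp using exists_private
  have side_injOn : Set.InjOn (fun u ↦ p u < t) {u ∈ A | G.Adj v u} :=
    fun x hx y hy hxy ↦ (hp x hx).eq_of_lt_iff_lt hG hs hx.1 hy.1 hvA hx.2 hy.2 (hp y hy) ht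
      (iff_of_eq hxy)
  calc {u ∈ A | G.Adj v u}.encard
      ≤ (Set.univ : Set Prop).encard :=
        Set.encard_le_encard_of_injOn (Set.mapsTo_univ _ _) side_injOn
    _ = 2 := by simp

end IntersectionGraph

/-- In an interval graph with a fixed representation, every vertex of a
minimum dominating set `A` is adjacent to at most two vertices of `A`. -/
theorem stmt_3
    {V : Type*} [Fintype V] (G : SimpleGraph V)
    (a b : V → ℝ) (hab : ∀ v, a v < b v)
    (hadj : ∀ u v : V, G.Adj u v ↔
      u ≠ v ∧ (Set.Icc (a u) (b u) ∩ Set.Icc (a v) (b v)).Nonempty)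
    (A : Set V)
    (hdom : ∀ v : V, v ∈ A ∨ ∃ u ∈ A, G.Adj v u)
    (hmin : ∀ S : Set V, (∀ v : V, v ∈ S ∨ ∃ u ∈ S, G.Adj v u) → A.ncard ≤ S.ncard) :
    ∀ v ∈ A, ({u ∈ A | G.Adj v u}).ncard ≤ 2 := by
  have hA : Minimal (IsDominating G) A :=
    ⟨hdom, fun S hS hSA ↦ (Set.eq_of_subset_of_ncard_le hSA (hmin S hS)).ge⟩
  exact fun v hv ↦ (Set.encard_le_coe_iff_finite_ncard_le.1
    (stmt_3_general hadj (fun _ ↦ Set.ordConnected_Icc) hA hv)).2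
end

section
/- Let G be an interval graph with a fixed interval representation on n ≥ 1 vertices, let δ be the minimum degree of G, and let γ be the minimum cardinality of a dominating set of G. Then γ·(δ + 1) ≤ 5n. -/
/-!
An interval graph has a dominating set `S` and a set `P` of vertices with pairwise disjoint closed
neighborhoods such that `|S| ≤ |P|`; this gives `γ * (δ + 1) ≤ n`, since each of the disjoint closed
neighborhoods has at least `δ + 1` vertices.

The two sets are built greedily from left to right. Among the vertices not yet dominated take `v`
with the leftmost right endpoint, put it into `P`, and put into `S` the closed neighbor `u` of `v`
with the rightmost right endpoint. Every remaining interval that starts at or before `b u` meets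
`I_u`, and an interval that starts after `b u` has no common closed neighbor with `v`.
-/

section

variable {V α : Type*} {G : SimpleGraph V}

/-- The closed neighborhood `N[v]` of `v`, as a set. -/
def closedNeighborSet (G : SimpleGraph V) (v : V) : Set V :=
  insert v (G.neighborSet v)

/-- A packing (or 2-packing) of `G`: a set of vertices whose closed neighborhoods are pairwise
disjoint. Its size is a lower bound for the size of every dominating set. -/
def IsPacking (G : SimpleGraph V) (P : Set V) : Prop :=
  P.PairwiseDisjoint (closedNeighborSet G)

/-- The closed intervals `[a v, b v]` represent the graph `G`. They are required to be nonempty, and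
may lie in any preorder and degenerate to a point. -/
structure IsIntervalRepresentation_s6 [Preorder α] (G : SimpleGraph V) (a b : V → α) : Prop where
  left_le_right : ∀ v, a v ≤ b v
  adj_iff : ∀ u v, G.Adj u v ↔ u ≠ v ∧ (Set.Icc (a u) (b u) ∩ Set.Icc (a v) (b v)).Nonempty

theorem mem_or_exists_adj_of_mem_closedNeighborSet {S : Set V} {u v : V} (hu : u ∈ S)
    (hv : v ∈ closedNeighborSet G u) : v ∈ S ∨ ∃ w ∈ S, G.Adj v w := by
  rcases hv with rfl | huv
  · exact Or.inl hu
  · exact Or.inr ⟨u, hu, huv.symm⟩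

theorem ncard_closedNeighborSet (v : V) (hfin : (G.neighborSet v).Finite) :
    (closedNeighborSet G v).ncard = (G.neighborSet v).ncard + 1 :=
  Set.ncard_insert_of_notMem G.irrefl hfin

theorem IsPacking.card_mul_succ_le_card [Finite V] {P : Finset V} (hP : IsPacking G P) {d : ℕ}
    (hd : ∀ v ∈ P, d ≤ (G.neighborSet v).ncard) : P.card * (d + 1) ≤ Nat.card V := by
  classical
  have := Fintype.ofFinite V
  calc P.card * (d + 1)
      ≤ ∑ v ∈ P, (closedNeighborSet G v).toFinset.card := by
        refine P.card_nsmul_le_sum _ (d + 1) fun v hv => ?_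
        rw [← Set.ncard_eq_toFinset_card', ncard_closedNeighborSet v (Set.toFinite _)]
        exact Nat.succ_le_succ (hd v hv)
    _ = (P.biUnion fun v => (closedNeighborSet G v).toFinset).card :=
        (Finset.card_biUnion fun _ hv _ hw hvw =>
          Set.disjoint_toFinset.2 (hP hv hw hvw)).symm
    _ ≤ Fintype.card V := Finset.card_le_univ _
    _ = Nat.card V := Nat.card_eq_fintype_card.symm

namespace IsIntervalRepresentation_s6

variable [LinearOrder α] {a b : V → α}

theorem mem_closedNeighborSet_iff (hG : IsIntervalRepresentation_s6 G a b) {u v : V} :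
    u ∈ closedNeighborSet G v ↔ a v ≤ b u ∧ a u ≤ b v := by
  have hu := hG.left_le_right u
  have hv := hG.left_le_right v
  rw [closedNeighborSet, Set.mem_insert_iff, G.mem_neighborSet, hG.adj_iff, Set.Icc_inter_Icc,
    Set.nonempty_Icc, sup_le_iff, le_inf_iff, le_inf_iff]
  grind

theorem mem_closedNeighborSet_of_right_le (hG : IsIntervalRepresentation_s6 G a b) {u v w : V}
    (hu : u ∈ closedNeighborSet G v) (hvw : b v ≤ b w) (hwu : a w ≤ b u) :
    w ∈ closedNeighborSet G u :=
  hG.mem_closedNeighborSet_iff.2 ⟨(hG.mem_closedNeighborSet_iff.1 hu).2.trans hvw, hwu⟩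

theorem disjoint_closedNeighborSet_of_lt_left (hG : IsIntervalRepresentation_s6 G a b) {v w : V}
    {t : α} (ht : ∀ x ∈ closedNeighborSet G v, b x ≤ t) (hw : t < a w) :
    Disjoint (closedNeighborSet G v) (closedNeighborSet G w) :=
  Set.disjoint_left.2 fun x hxv hxw =>
    ((ht x hxv).trans_lt hw).not_ge (hG.mem_closedNeighborSet_iff.1 hxw).1

theorem exists_dominating_card_le_packing [G.LocallyFinite]
    (hG : IsIntervalRepresentation_s6 G a b) (U : Finset V) :
    ∃ S P : Finset V, S.card ≤ P.card ∧ P ⊆ U ∧ IsPacking G P ∧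
      ∀ w ∈ U, ∃ u ∈ S, w ∈ closedNeighborSet G u := by
  classical
  induction U using Finset.strongInduction with
  | H U ih =>
    rcases U.eq_empty_or_nonempty with rfl | hU
    · exact ⟨∅, ∅, by simp [IsPacking]⟩
    obtain ⟨v, hvU, hv_min⟩ := U.exists_min_image b hU
    obtain ⟨u, huv, hu_max⟩ := Set.exists_max_image (closedNeighborSet G v) b
      ((Set.toFinite _).insert v) (Set.insert_nonempty v _)
    have hvu : ¬ b u < a v := (hG.mem_closedNeighborSet_iff.1 huv).1.not_gt
    have hrest : {w ∈ U | b u < a w} ⊂ U := Finset.filter_ssubset.2 ⟨v, hvU, hvu⟩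
    obtain ⟨S, P, hcard, hPU, hP, hS⟩ := ih _ hrest
    have hP_right : ∀ w ∈ P, b u < a w := fun w hw => (Finset.mem_filter.1 (hPU hw)).2
    refine ⟨insert u S, insert v P, ?_, Finset.insert_subset hvU (hPU.trans hrest.subset), ?_, ?_⟩
    · rw [Finset.card_insert_of_notMem fun hvP => hvu (hP_right v hvP)]
      exact (Finset.card_insert_le u S).trans (Nat.succ_le_succ hcard)
    · rw [Finset.coe_insert]
      exact Set.PairwiseDisjoint.insert hP fun w hw _ =>
        hG.disjoint_closedNeighborSet_of_lt_left hu_max (hP_right w hw)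
    · intro w hw
      rcases lt_or_ge (b u) (a w) with huw | hwu
      · obtain ⟨s, hs, hws⟩ := hS w (Finset.mem_filter.2 ⟨hw, huw⟩)
        exact ⟨s, Finset.mem_insert_of_mem hs, hws⟩
      · exact ⟨u, Finset.mem_insert_self u S,
          hG.mem_closedNeighborSet_of_right_le huv (hv_min w hw) hwu⟩

end IsIntervalRepresentation_s6

theorem stmt_6_general [Finite V] [LinearOrder α] {a b : V → α}
    (hG : IsIntervalRepresentation_s6 G a b)
    {δ : ℕ} (hδ : IsLeast (Set.range fun v : V => (G.neighborSet v).ncard) δ)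
    {γ : ℕ} (hγ : IsLeast {k : ℕ | ∃ S : Set V,
      (∀ v : V, v ∈ S ∨ ∃ u ∈ S, G.Adj v u) ∧ S.ncard = k} γ) :
    γ * (δ + 1) ≤ Nat.card V := by
  classical
  have := Fintype.ofFinite V
  obtain ⟨S, P, hcard, -, hP, hS⟩ := hG.exists_dominating_card_le_packing Finset.univ
  have hγS : γ ≤ S.card := by
    refine hγ.2 ⟨S, fun v => ?_, Set.ncard_coe_finset S⟩
    obtain ⟨u, hu, hvu⟩ := hS v (Finset.mem_univ v)
    exact mem_or_exists_adj_of_mem_closedNeighborSet hu hvu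
  calc γ * (δ + 1) ≤ P.card * (δ + 1) := Nat.mul_le_mul_right _ (hγS.trans hcard)
    _ ≤ Nat.card V := hP.card_mul_succ_le_card fun v _ => hδ.2 ⟨v, rfl⟩

end

/-- For an interval graph on `n ≥ 1` vertices with minimum degree `δ` and
domination number `γ`, we have `γ * (δ + 1) ≤ 5 * n`. -/
theorem stmt_6
    {V : Type*} [Fintype V] (G : SimpleGraph V)
    (a b : V → ℝ) (hab : ∀ v, a v < b v)
    (hadj : ∀ u v : V, G.Adj u v ↔
      u ≠ v ∧ (Set.Icc (a u) (b u) ∩ Set.Icc (a v) (b v)).Nonempty)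
    (hn : 1 ≤ Fintype.card V)
    (δ : ℕ) (hδ : IsLeast (Set.range fun v : V => (G.neighborSet v).ncard) δ)
    (γ : ℕ)
    (hγ : IsLeast {k : ℕ | ∃ S : Set V,
      (∀ v : V, v ∈ S ∨ ∃ u ∈ S, G.Adj v u) ∧ S.ncard = k} γ) :
    γ * (δ + 1) ≤ 5 * Fintype.card V := by
  have hle := stmt_6_general ⟨fun v => (hab v).le, hadj⟩ hδ hγ
  exact hle.trans (Nat.card_eq_fintype_card.trans_le (Nat.le_mul_of_pos_left _ (by norm_num)))
end

section
/- Let G be a connected interval graph with a fixed interval representation, let V_1, …, V_l be the cliques determined by the points y_1, …, y_l, let 1 ≤ a ≤ b ≤ l, and let H = G[a,b] be the subgraph of G induced on ⋃_{a ≤ i ≤ b} V_i. If S ⊆ V(G) is a set of vertices such that every vertex of H belongs to S or is adjacent in G to a vertex of S, then there exists a set S' ⊆ V(H) with |S'| ≤ |S| that is a dominating set of H. -/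
/-!
A vertex `u` outside the window `U` has an interval lying entirely to one side of
`[y a₀, y b₀]`, so all its neighbours in `U` contain the endpoint of `[y a₀, y b₀]` on that side
and form a clique. Hence any single neighbour of `u` in `U` dominates everything in `U` that `u`
dominates, and each vertex of `S` outside `U` can be replaced by such a neighbour.
-/

section Domination

variable {V : Type*} {G : SimpleGraph V} {S U : Set V}

/-- Domination of the vertex set `U` by the vertex set `S` in the graph `G`. Neither set has to
contain the other; for `S ⊆ U` this says that `S` is a dominating set of the subgraph induced
on `U`. -/
def Dominates (G : SimpleGraph V) (S U : Set V) : Prop :=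
  ∀ v ∈ U, v ∈ S ∨ ∃ u ∈ S, G.Adj v u

theorem dominates_iff_exists_eq_or_adj :
    Dominates G S U ↔ ∀ v ∈ U, ∃ u ∈ S, v = u ∨ G.Adj v u := by
  simp only [Dominates, and_or_left, exists_or, exists_eq_right']

theorem exists_forall_eq_or_adj_imp_of_isClique
    (hclique : ∀ u ∉ U, G.IsClique (U ∩ G.neighborSet u)) (u : V) :
    ∃ w, ∀ v ∈ U, v = u ∨ G.Adj v u → w ∈ U ∧ (v = w ∨ G.Adj v w) := by
  by_cases hu : u ∈ U
  · exact ⟨u, fun v _ hvu => ⟨hu, hvu⟩⟩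
  have adj_of_eq_or_adj {v : V} (hv : v ∈ U) (hvu : v = u ∨ G.Adj v u) : G.Adj u v :=
    (hvu.resolve_left fun h => hu (h ▸ hv)).symm
  by_cases hnbr : ∃ w ∈ U, G.Adj u w
  · obtain ⟨w, hw, huw⟩ := hnbr
    exact ⟨w, fun v hv hvu => ⟨hw, or_iff_not_imp_left.2
      (hclique u hu ⟨hv, adj_of_eq_or_adj hv hvu⟩ ⟨hw, huw⟩)⟩⟩
  · exact ⟨u, fun v hv hvu => (hnbr ⟨v, hv, adj_of_eq_or_adj hv hvu⟩).elim⟩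

theorem Dominates.exists_subset_encard_le_of_isClique
    (hclique : ∀ u ∉ U, G.IsClique (U ∩ G.neighborSet u)) (hS : Dominates G S U) :
    ∃ S' ⊆ U, S'.encard ≤ S.encard ∧ Dominates G S' U := by
  choose f hf using exists_forall_eq_or_adj_imp_of_isClique hclique
  refine ⟨f '' S ∩ U, Set.inter_subset_right,
    (Set.encard_le_encard Set.inter_subset_left).trans (Set.encard_image_le f S), ?_⟩
  rw [dominates_iff_exists_eq_or_adj] at hS ⊢
  intro v hv
  obtain ⟨u, huS, hvu⟩ := hS v hv
  obtain ⟨hfu, hvfu⟩ := hf u v hv hvu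
  exact ⟨f u, ⟨Set.mem_image_of_mem f huS, hfu⟩, hvfu⟩

end Domination

section IntervalRepresentation

variable {V α : Type*} [LinearOrder α] {G : SimpleGraph V} {a b : V → α}

/-- The closed intervals `[a v, b v]` represent `G` as an interval graph: distinct vertices are
adjacent exactly when their intervals meet. -/
def IsIntervalRepresentation_s8 (G : SimpleGraph V) (a b : V → α) : Prop :=
  ∀ u v, G.Adj u v ↔ u ≠ v ∧ (Set.Icc (a u) (b u) ∩ Set.Icc (a v) (b v)).Nonempty

/-- The vertices whose interval meets `[c, d]`. -/
def verticesMeeting (a b : V → α) (c d : α) : Set V :=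
  {v | (Set.Icc (a v) (b v) ∩ Set.Icc c d).Nonempty}

theorem left_mem_Icc_of_lt_of_inter_nonempty {p q r s c d : α} (hsc : s < c)
    (hcd : (Set.Icc p q ∩ Set.Icc c d).Nonempty) (hrs : (Set.Icc p q ∩ Set.Icc r s).Nonempty) :
    c ∈ Set.Icc p q := by
  obtain ⟨z, hz, hcz, -⟩ := hcd
  obtain ⟨t, ht, -, hts⟩ := hrs
  exact ⟨(ht.1.trans hts).trans hsc.le, hcz.trans hz.2⟩

theorem right_mem_Icc_of_lt_of_inter_nonempty {p q r s c d : α} (hdr : d < r)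
    (hcd : (Set.Icc p q ∩ Set.Icc c d).Nonempty) (hrs : (Set.Icc p q ∩ Set.Icc r s).Nonempty) :
    d ∈ Set.Icc p q := by
  obtain ⟨z, hz, -, hzd⟩ := hcd
  obtain ⟨t, ht, hrt, -⟩ := hrs
  exact ⟨hz.1.trans hzd, hdr.le.trans (hrt.trans ht.2)⟩

theorem lt_or_lt_of_not_Icc_inter_Icc_nonempty {r s c d : α} (hrs : r ≤ s) (hcd : c ≤ d)
    (h : ¬(Set.Icc r s ∩ Set.Icc c d).Nonempty) : s < c ∨ d < r := by
  contrapose! h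
  rw [Set.Icc_inter_Icc, Set.nonempty_Icc]
  exact sup_le (le_inf hrs h.2) (le_inf h.1 hcd)

theorem IsIntervalRepresentation_s8.isClique_verticesMeeting_inter_neighborSet
    (hG : IsIntervalRepresentation_s8 G a b) {c d : α} {u : V} (hu : u ∉ verticesMeeting a b c d) :
    G.IsClique (verticesMeeting a b c d ∩ G.neighborSet u) := by
  rintro v ⟨hv, huv⟩ w ⟨hw, huw⟩ hvw
  have hvu := ((hG v u).1 huv.symm).2
  have hwu := ((hG w u).1 huw.symm).2
  have hau : a u ≤ b u := Set.nonempty_Icc.1 hvu.right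
  have hcd : c ≤ d := Set.nonempty_Icc.1 hv.right
  refine (hG v w).2 ⟨hvw, ?_⟩
  rcases lt_or_lt_of_not_Icc_inter_Icc_nonempty hau hcd hu with hleft | hright
  · exact ⟨c, left_mem_Icc_of_lt_of_inter_nonempty hleft hv hvu,
      left_mem_Icc_of_lt_of_inter_nonempty hleft hw hwu⟩
  · exact ⟨d, right_mem_Icc_of_lt_of_inter_nonempty hright hv hvu,
      right_mem_Icc_of_lt_of_inter_nonempty hright hw hwu⟩

end IntervalRepresentation

section Interlacing

variable {α : Type*} [LinearOrder α] {l : ℕ} {x : Fin (l + 1) → α} {y : Fin l → α}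

/-- The points `y` strictly separate consecutive points of `x`:
`x 0 < y 0 < x 1 < y 1 < ⋯ < y (l - 1) < x l`. -/
def Interlaces (x : Fin (l + 1) → α) (y : Fin l → α) : Prop :=
  ∀ i, x i.castSucc < y i ∧ y i < x i.succ

namespace Interlaces

theorem strictMono_left (h : Interlaces x y) : StrictMono x :=
  Fin.strictMono_iff_lt_succ.2 fun i => (h i).1.trans (h i).2

theorem right_lt_left_iff (h : Interlaces x y) {i : Fin l} {p : Fin (l + 1)} :
    y i < x p ↔ i.castSucc < p := by
  refine ⟨fun hyx => h.strictMono_left.lt_iff_lt.1 ((h i).1.trans hyx), fun hip => ?_⟩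
  exact (h i).2.trans_le (h.strictMono_left.monotone (Fin.castSucc_lt_iff_succ_le.1 hip))

theorem strictMono_right (h : Interlaces x y) : StrictMono y := fun _ j hij =>
  (h.right_lt_left_iff.2 (Fin.castSucc_lt_castSucc_iff.2 hij)).trans (h j).1

theorem exists_right_mem_Icc_iff (h : Interlaces x y) {s t : α} (hst : s < t)
    (hs : s ∈ Set.range x) (ht : t ∈ Set.range x) {i j : Fin l} :
    (∃ k ∈ Set.Icc i j, y k ∈ Set.Icc s t) ↔ (Set.Icc s t ∩ Set.Icc (y i) (y j)).Nonempty := by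
  have hy := h.strictMono_right
  refine ⟨fun ⟨k, hk, hyk⟩ => ⟨y k, hyk, hy.monotone hk.1, hy.monotone hk.2⟩, ?_⟩
  rintro ⟨z, ⟨hsz, hzt⟩, hiz, hzj⟩
  rcases le_or_gt s (y i) with hsi | his
  · exact ⟨i, ⟨le_rfl, hy.le_iff_le.1 (hiz.trans hzj)⟩, hsi, hiz.trans hzt⟩
  -- Here `s = x k` with `i < k ≤ j`, and `y k` follows `s` before the next grid point.
  obtain ⟨p, rfl⟩ := hs
  obtain ⟨q, rfl⟩ := ht
  have hpq : p < q := h.strictMono_left.lt_iff_lt.1 hst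
  obtain ⟨k, rfl⟩ := Fin.exists_castSucc_eq.2 (Fin.ne_last_of_lt hpq)
  have hik : i < k := h.right_lt_left_iff.1 his
  have hkj : k ≤ j := not_lt.1 fun hjk =>
    (hsz.trans hzj).not_gt (h.right_lt_left_iff.2 (Fin.castSucc_lt_castSucc_iff.2 hjk))
  exact ⟨k, ⟨hik.le, hkj⟩, (h k).1.le, (h.right_lt_left_iff.2 hpq).le⟩

end Interlaces

end Interlacing

theorem stmt_8_general
    {V α : Type*} [LinearOrder α] {G : SimpleGraph V} {a b : V → α} (hab : ∀ v, a v < b v)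
    (hG : IsIntervalRepresentation_s8 G a b) {l : ℕ} {x : Fin (l + 1) → α} {y : Fin l → α}
    (hxy : Interlaces x y) (hx : Set.range a ∪ Set.range b ⊆ Set.range x) (a₀ b₀ : Fin l)
    {U S : Set V} (hU : ∀ v, v ∈ U ↔ ∃ i ∈ Set.Icc a₀ b₀, y i ∈ Set.Icc (a v) (b v))
    (hS : Dominates G S U) :
    ∃ S' ⊆ U, S'.encard ≤ S.encard ∧ Dominates G S' U := by
  have hU_meeting : U = verticesMeeting a b (y a₀) (y b₀) :=
    Set.ext fun v => (hU v).trans <| hxy.exists_right_mem_Icc_iff (hab v)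
      (hx (.inl (Set.mem_range_self v))) (hx (.inr (Set.mem_range_self v)))
  refine hS.exists_subset_encard_le_of_isClique fun u hu => ?_
  rw [hU_meeting] at hu ⊢
  exact hG.isClique_verticesMeeting_inter_neighborSet hu

/-- In a connected interval graph with a fixed representation, let
`U = ⋃_{a₀ ≤ i ≤ b₀} Vset i` be the vertex set of an interval subgraph. If a set `S` of
vertices of `G` dominates (in `G`) every vertex of `U`, then there is a set `S' ⊆ U`
with `|S'| ≤ |S|` dominating the induced subgraph on `U`. -/
theorem stmt_8
    {V : Type*} [Fintype V] (G : SimpleGraph V)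
    (a b : V → ℝ) (hab : ∀ v, a v < b v)
    (hadj : ∀ u v : V, G.Adj u v ↔
      u ≠ v ∧ (Set.Icc (a u) (b u) ∩ Set.Icc (a v) (b v)).Nonempty)
    (hconn : G.Connected)
    (l : ℕ) (x : Fin (l + 1) → ℝ) (hx : StrictMono x)
    (hxrange : Set.range x = Set.range a ∪ Set.range b)
    (y : Fin l → ℝ)
    (hy : ∀ i : Fin l, x i.castSucc < y i ∧ y i < x i.succ)
    (Vset : Fin l → Set V)
    (hVset : ∀ i v, v ∈ Vset i ↔ y i ∈ Set.Icc (a v) (b v))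
    (a₀ b₀ : Fin l) (hab₀ : a₀ ≤ b₀)
    (U : Set V) (hU : U = ⋃ i ∈ Set.Icc a₀ b₀, Vset i)
    (S : Set V)
    (hS : ∀ v ∈ U, v ∈ S ∨ ∃ u ∈ S, G.Adj v u) :
    ∃ S' : Set V, S' ⊆ U ∧ S'.ncard ≤ S.ncard ∧
      ∀ v ∈ U, v ∈ S' ∨ ∃ u ∈ S', G.Adj v u := by
  obtain ⟨S', hS'U, hcard, hS'⟩ := stmt_8_general hab hadj hy hxrange.ge a₀ b₀
    (fun v => by simp only [hU, Set.mem_iUnion₂, hVset, exists_prop]) hS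
  exact ⟨S', hS'U, ENat.toNat_le_toNat hcard S.toFinite.encard_lt_top.ne, hS'⟩
end

section
/- For every positive integer m, the m-hypercube graph H_m has a dominating set D with |D|·(m + 1) ≤ 2^{m+1}; that is, the domination number of H_m is at most 2^{m+1}/(m+1). -/
/-!
This is the Hamming code construction. Choose `k` with `2 ^ k ≤ m + 1 < 2 ^ (k + 1)` and label the
coordinates by elements of `𝔽₂ ^ k` so that every nonzero element occurs as a label. Adding up the
labels of the coordinates where `v` is `true` gives the syndrome of `v`, and flipping a coordinate
adds its label to the syndrome. Any syndrome can therefore be reached from any `v` by at most one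
flip, i.e. every fibre of the syndrome map is dominating; the smallest of the `2 ^ k` fibres has at
most `2 ^ m / 2 ^ k` elements.
-/

theorem exists_ncard_fiber_mul_card_le {α β : Type*} [Finite α] [Finite β] [Nonempty β]
    (f : α → β) : ∃ b, (f ⁻¹' {b}).ncard * Nat.card β ≤ Nat.card α := by
  obtain ⟨b, hb⟩ := Finite.exists_min fun b => (f ⁻¹' {b}).ncard
  refine ⟨b, ?_⟩
  have := Fintype.ofFinite β
  calc (f ⁻¹' {b}).ncard * Nat.card β
      = ∑ _c : β, (f ⁻¹' {b}).ncard := by simp [mul_comm]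
    _ ≤ ∑ c, (f ⁻¹' {c}).ncard := Finset.sum_le_sum fun c _ => hb c
    _ = Nat.card (Σ c, f ⁻¹' {c}) := by simp only [Nat.card_sigma, Nat.card_coe_set_eq]
    _ = Nat.card α := Nat.card_congr (Equiv.sigmaFiberEquiv f)

theorem exists_forall_ne_zero_mem_range {ι A : Type*} [Finite ι] [Finite A] [Zero A]
    (hcard : Nat.card A ≤ Nat.card ι + 1) : ∃ g : ι → A, ∀ x ≠ 0, x ∈ Set.range g := by
  classical
  have := Fintype.ofFinite ι
  have := Fintype.ofFinite A
  have hle : Fintype.card {x : A // x ≠ 0} ≤ Fintype.card ι := by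
    rw [Fintype.card_subtype_compl, Fintype.card_subtype_eq]
    simp only [Nat.card_eq_fintype_card] at hcard
    omega
  obtain ⟨e⟩ := Function.Embedding.nonempty_of_card_le hle
  exact ⟨Function.extend e Subtype.val 0, fun x hx => ⟨e ⟨x, hx⟩, e.injective.extend_apply _ _ _⟩⟩

/-- The syndrome of the word `v` with respect to the parity-check matrix with columns `g i`: the
sum of the columns at which `v` is `true`. -/
def syndrome {ι A : Type*} [Fintype ι] [AddCommMonoid A] (g : ι → A) (v : ι → Bool) : A :=
  ∑ i, if v i then g i else 0

section Syndrome

variable {ι A : Type*} [Fintype ι] [DecidableEq ι] [AddCommGroup A] [Module (ZMod 2) A]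

theorem syndrome_update_not (g : ι → A) (v : ι → Bool) (i : ι) :
    syndrome g (Function.update v i (!v i)) = syndrome g v + g i := by
  have hrest : ∑ j ∈ {i}ᶜ, (if Function.update v i (!v i) j then g j else 0) =
      ∑ j ∈ {i}ᶜ, if v j then g j else 0 :=
    Finset.sum_congr rfl fun j hj => by
      rw [Function.update_of_ne (by simpa using hj)]
  rw [syndrome, syndrome, Fintype.sum_eq_add_sum_compl i, Fintype.sum_eq_add_sum_compl i, hrest,
    Function.update_self, add_right_comm]
  congr 1
  cases v i <;> simp [ZModModule.add_self]

theorem syndrome_eq_or_exists_syndrome_update_not_eq {g : ι → A}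
    (hg : ∀ x ≠ 0, x ∈ Set.range g) (c : A) (v : ι → Bool) :
    syndrome g v = c ∨ ∃ i, syndrome g (Function.update v i (!v i)) = c := by
  refine or_iff_not_imp_left.2 fun hv => ?_
  obtain ⟨i, hi⟩ := hg (c - syndrome g v) (sub_ne_zero.2 (Ne.symm hv))
  exact ⟨i, by rw [syndrome_update_not, hi, add_sub_cancel]⟩

end Syndrome

theorem exists_dominating_ncard_mul_card_le (ι A : Type*) [Finite ι] [DecidableEq ι]
    [AddCommGroup A] [Module (ZMod 2) A] [Finite A] (hcard : Nat.card A ≤ Nat.card ι + 1) :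
    ∃ D : Set (ι → Bool), (∀ v, v ∈ D ∨ ∃ i, Function.update v i (!v i) ∈ D) ∧
      D.ncard * Nat.card A ≤ 2 ^ Nat.card ι := by
  have := Fintype.ofFinite ι
  obtain ⟨g, hg⟩ := exists_forall_ne_zero_mem_range hcard
  obtain ⟨c, hc⟩ := exists_ncard_fiber_mul_card_le (syndrome g)
  exact ⟨syndrome g ⁻¹' {c}, syndrome_eq_or_exists_syndrome_update_not_eq hg c,
    by simpa using hc⟩

/-- For every positive integer `m`, the `m`-hypercube graph has a
dominating set `D` with `|D| * (m + 1) ≤ 2 ^ (m + 1)`. -/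
theorem stmt_10
    (m : ℕ) (hm : 1 ≤ m)
    (H : SimpleGraph (Fin m → Bool))
    (hH : ∀ u v : Fin m → Bool, H.Adj u v ↔
      ∃ i : Fin m, u i ≠ v i ∧ ∀ j : Fin m, j ≠ i → u j = v j) :
    ∃ D : Set (Fin m → Bool),
      (∀ v : Fin m → Bool, v ∈ D ∨ ∃ u ∈ D, H.Adj v u) ∧
      D.ncard * (m + 1) ≤ 2 ^ (m + 1) := by
  have hadj (v : Fin m → Bool) (i : Fin m) : H.Adj v (Function.update v i (!v i)) :=
    (hH _ _).2 ⟨i, by simp, fun j hj => by simp [hj]⟩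
  let k := Nat.log 2 (m + 1)
  have hk_le : 2 ^ k ≤ m + 1 := Nat.pow_log_le_self 2 m.succ_ne_zero
  have hlt_k : m + 1 < 2 ^ (k + 1) := Nat.lt_pow_succ_log_self one_lt_two _
  obtain ⟨D, hdom, hcard⟩ :=
    exists_dominating_ncard_mul_card_le (Fin m) (Fin k → ZMod 2) (by simpa using hk_le)
  have hD : D.ncard * 2 ^ k ≤ 2 ^ m := by simpa using hcard
  refine ⟨D, fun v => (hdom v).imp_right fun ⟨i, hi⟩ => ⟨_, hi, hadj v i⟩, ?_⟩
  calc D.ncard * (m + 1)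
      ≤ D.ncard * 2 ^ (k + 1) := by gcongr
    _ = D.ncard * 2 ^ k * 2 := by rw [pow_succ, mul_assoc]
    _ ≤ 2 ^ m * 2 := by gcongr
    _ = 2 ^ (m + 1) := (pow_succ 2 m).symm
end
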